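/- arXiv:0804.3579 — 8 statements merged into one kernel-verified Lean document; each statement's English description precedes it below -/
import Mathlib

section
/- Let G be a group (written multiplicatively), let k ≥ 1 and 1 ≤ m ≤ k be integers, and for each n ∈ ℕ let f_n : G^{k+1} → G and g_n : G^m → G, and let h : G^{k+1-m} → G. Assume the semiconjugate functional equation holds: for every n ∈ ℕ and all u_0, …, u_k ∈ G, f_n(u_0,…,u_k) * h(u_0,…,u_{k-m}) = g_n(u_0 * h(u_1,…,u_{k+1-m}), u_1 * h(u_2,…,u_{k+2-m}), …, u_{m-1} * h(u_m,…,u_k)). If a sequence (x_n)_{n ≥ -k} in G satisfies x_{n+1} = f_n(x_n, x_{n-1}, …, x_{n-k}) for all n ≥ 0, then the sequence t_n := x_n * h(x_{n-1}, x_{n-2}, …, x_{n-(k+1-m)}) (defined for n ≥ -(m-1)) satisfies, for all n ≥ 0, the factor equation t_{n+1} = g_n(t_n, t_{n-1}, …, t_{n-m+1}) and the cofactor equation x_{n+1} = t_{n+1} * h(x_n, x_{n-1}, …, x_{n-(k-m)})^{-1}. -/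
section Factorization

variable {α : Type*} {m d N : ℕ}

/-- The vector `(x_n, x_{n-1}, …, x_{n-l+1})` of the `l` most recent terms of `x` at time `n`,
i.e. the argument of a recurrence of order `l`. -/
def lagVector (x : ℤ → α) (l : ℕ) (n : ℤ) : Fin l → α :=
  fun i => x (n - i)

/-- The sequence `t_n = x_n * h(x_{n-1}, …, x_{n-d})`, the candidate solution of the factor
equation. -/
def factorSeq [Mul α] (h : (Fin d → α) → α) (x : ℤ → α) (n : ℤ) : α :=
  x n * h (lagVector x d (n - 1))

/-- The semiconjugate functional equation: `g` and `h` form a type-`(m, d)` factorization of the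
recurrence map `f`. The number `N` of arguments of `f` is a separate variable, rather than the
literal `m + d`, so that orders written with truncated subtraction fit without casts. -/
def IsSemiconjFactorization [Mul α] (hN : m + d = N) (f : (Fin N → α) → α)
    (g : (Fin m → α) → α) (h : (Fin d → α) → α) : Prop :=
  ∀ u : Fin N → α,
    f u * h (fun i => u ⟨i, by omega⟩) =
      g (fun j => u ⟨j, by omega⟩ * h (fun i => u ⟨j + 1 + i, by omega⟩))

theorem factorSeq_add_one [Mul α] (h : (Fin d → α) → α) (x : ℤ → α) (n : ℤ) :
    factorSeq h x (n + 1) = x (n + 1) * h (lagVector x d n) := by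
  rw [factorSeq, add_sub_cancel_right]

theorem lagVector_factorSeq_apply [Mul α] (h : (Fin d → α) → α) (x : ℤ → α) (n : ℤ) (j : Fin m) :
    lagVector (factorSeq h x) m n j = x (n - j) * h (fun i => x (n - (j + 1 + i : ℕ))) := by
  have lags_shift : lagVector x d (n - j - 1) = fun i : Fin d => x (n - (j + 1 + i : ℕ)) :=
    funext fun i => congrArg x (by push_cast; ring)
  rw [← lags_shift]
  rfl

theorem eq_factorSeq_mul_inv [Group α] (h : (Fin d → α) → α) (x : ℤ → α) (n : ℤ) :
    x (n + 1) = factorSeq h x (n + 1) * (h (lagVector x d n))⁻¹ := by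
  rw [factorSeq_add_one, mul_inv_cancel_right]

theorem IsSemiconjFactorization.factorSeq_add_one_eq [Mul α] {hN : m + d = N}
    {f : (Fin N → α) → α} {g : (Fin m → α) → α} {h : (Fin d → α) → α}
    (hfgh : IsSemiconjFactorization hN f g h) {x : ℤ → α} {n : ℤ}
    (hx : x (n + 1) = f (lagVector x N n)) :
    factorSeq h x (n + 1) = g (lagVector (factorSeq h x) m n) :=
  calc
    factorSeq h x (n + 1) = f (lagVector x N n) * h (lagVector x d n) := by
      rw [factorSeq_add_one, hx]
    _ = g (fun j => x (n - j) * h (fun i => x (n - (j + 1 + i : ℕ)))) :=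
      hfgh (lagVector x N n)
    _ = g (lagVector (factorSeq h x) m n) :=
      congrArg g (funext fun j => (lagVector_factorSeq_apply h x n j).symm)

end Factorization

/-- Semiconjugate factorization (Theorem 1, forward direction): if the semiconjugate
functional equation holds, then every solution `x` of the order `k+1` equation gives,
via `t_n = x_n * h(x_{n-1},…,x_{n-(k+1-m)})`, a solution of the factor equation of
order `m` together with the cofactor equation of order `k+1-m`. -/
theorem stmt_0 {G : Type*} [Group G] (k m : ℕ) (hk : 1 ≤ k) (hm : 1 ≤ m) (hmk : m ≤ k)
    (f : ℕ → (Fin (k + 1) → G) → G) (g : ℕ → (Fin m → G) → G)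
    (h : (Fin (k + 1 - m) → G) → G)
    (hsc : ∀ (n : ℕ) (u : Fin (k + 1) → G),
      f n u * h (fun i => u ⟨i.val, by have := i.isLt; omega⟩) =
        g n (fun j => u ⟨j.val, by have := j.isLt; omega⟩ *
          h (fun i => u ⟨j.val + 1 + i.val, by have := i.isLt; have := j.isLt; omega⟩)))
    (x : ℤ → G)
    (hx : ∀ n : ℕ, x ((n : ℤ) + 1) = f n (fun i => x ((n : ℤ) - i.val)))
    (t : ℤ → G)
    (ht : ∀ n : ℤ, -(m : ℤ) + 1 ≤ n → t n = x n * h (fun i => x (n - 1 - i.val))) :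
    ∀ n : ℕ,
      t ((n : ℤ) + 1) = g n (fun j => t ((n : ℤ) - j.val)) ∧
      x ((n : ℤ) + 1) = t ((n : ℤ) + 1) * (h (fun i => x ((n : ℤ) - i.val)))⁻¹ := by
  intro n
  have hfgh : IsSemiconjFactorization (by omega) (f n) (g n) h := hsc n
  have t_next : t (n + 1) = factorSeq h x (n + 1) := ht _ (by omega)
  have t_lags : (fun j : Fin m => t (n - j.val)) = lagVector (factorSeq h x) m n :=
    funext fun j => ht _ (by omega)
  rw [t_next, t_lags]
  exact ⟨hfgh.factorSeq_add_one_eq (hx n), eq_factorSeq_mul_inv h x n⟩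
end

section
/- Let G be a group (written multiplicatively), let k ≥ 1, and let f : G^{k+1} → G and g : G^k → G be functions such that for all u_0, …, u_k ∈ G, f(u_0,…,u_k) * u_0^{-1} = g(u_0 * u_1^{-1}, u_1 * u_2^{-1}, …, u_{k-1} * u_k^{-1}). Then f is homogeneous of degree 1 relative to G: for all t, u_0, …, u_k ∈ G, f(u_0 * t, u_1 * t, …, u_k * t) = f(u_0, …, u_k) * t. -/
section RightTranslation

variable {G : Type*} [Group G]

/-- Homogeneity of degree 1 relative to `G` (right version), for functions of a family of
variables indexed by an arbitrary type `ι`; the paper's functions on `G^{k+1}` have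
`ι = Fin (k + 1)`. -/
def IsRightHomogeneous {ι : Type*} (f : (ι → G) → G) : Prop :=
  ∀ (t : G) (u : ι → G), f (fun i => u i * t) = f u * t

/-- The inversion-based form symmetry `H(u_0, …, u_k) = (u_0 * u_1⁻¹, …, u_{k-1} * u_k⁻¹)`. -/
def inversionForm {k : ℕ} (u : Fin (k + 1) → G) : Fin k → G :=
  fun j => u j.castSucc * (u j.succ)⁻¹

theorem inversionForm_mul_right {k : ℕ} (u : Fin (k + 1) → G) (t : G) :
    inversionForm (fun i => u i * t) = inversionForm u := by
  funext j
  simp only [inversionForm, ← div_eq_mul_inv, mul_div_mul_right_eq_div]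

theorem isRightHomogeneous_iff_mul_inv_apply {ι : Type*} {f : (ι → G) → G} (i : ι) :
    IsRightHomogeneous f ↔
      ∀ (t : G) (u : ι → G), f (fun j => u j * t) * (u i * t)⁻¹ = f u * (u i)⁻¹ := by
  refine forall₂_congr fun t u => ?_
  rw [mul_inv_eq_iff_eq_mul, ← mul_assoc, inv_mul_cancel_right]

end RightTranslation

/-- Theorem 2 (one direction): if `f` satisfies the inversion-based form symmetry
relation `f(u_0,…,u_k) * u_0⁻¹ = g(u_0 * u_1⁻¹, …, u_{k-1} * u_k⁻¹)` for some `g`,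
then `f` is homogeneous of degree 1 relative to the group `G`. -/
theorem stmt_3 {G : Type*} [Group G] (k : ℕ) (hk : 1 ≤ k)
    (f : (Fin (k + 1) → G) → G) (g : (Fin k → G) → G)
    (hsc : ∀ u : Fin (k + 1) → G,
      f u * (u 0)⁻¹ = g (fun j => u ⟨j.val, by have := j.isLt; omega⟩ *
        (u ⟨j.val + 1, by have := j.isLt; omega⟩)⁻¹)) :
    ∀ (t : G) (u : Fin (k + 1) → G), f (fun i => u i * t) = f u * t := by
  have hf : ∀ u, f u * (u 0)⁻¹ = g (inversionForm u) := hsc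
  refine (isRightHomogeneous_iff_mul_inv_apply 0).mpr fun t u => ?_
  calc
    f (fun i => u i * t) * (u 0 * t)⁻¹ = g (inversionForm fun i => u i * t) := hf _
    _ = g (inversionForm u) := by rw [inversionForm_mul_right]
    _ = f u * (u 0)⁻¹ := (hf u).symm
end

section
/- Let G be a group (written multiplicatively), let k ≥ 1, and for each n ∈ ℕ let f_n : G^{k+1} → G be homogeneous of degree 1 relative to G, i.e., f_n(u_0 * t, …, u_k * t) = f_n(u_0,…,u_k) * t for all t, u_0,…,u_k ∈ G. If a sequence (x_n)_{n ≥ -k} in G satisfies x_{n+1} = f_n(x_n, …, x_{n-k}) for all n ≥ 0, then the sequence t_n := x_n * x_{n-1}^{-1} (defined for n ≥ -k+1) satisfies, for all n ≥ 0, the factor equation of order k: t_{n+1} = f_n(1, t_n^{-1}, (t_n * t_{n-1})^{-1}, …, (t_n * t_{n-1} * ⋯ * t_{n-k+1})^{-1}), where 1 is the identity of G, and the cofactor equation x_{n+1} = t_{n+1} * x_n. -/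
/-!
Right translation by `x_n⁻¹` turns `x_{n+1} = f_n(x_n, …, x_{n-k})` into
`x_{n+1} x_n⁻¹ = f_n(x_n x_n⁻¹, …, x_{n-k} x_n⁻¹)` by homogeneity. The left side is `t_{n+1}`, and
each `x_{n-i} x_n⁻¹` is the inverse of `x_n x_{n-i}⁻¹`, which is the telescoping product
`t_n t_{n-1} ⋯ t_{n-i+1}`.
-/

/-- Homogeneity of degree 1 (HD1) relative to `G`, in the right version: `f` commutes with
simultaneous right translation of all its arguments, which may be indexed by any type `ι`. -/
def IsHomogeneousDegreeOne {ι G : Type*} [Mul G] (f : (ι → G) → G) : Prop :=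
  ∀ (t : G) (u : ι → G), f (fun i => u i * t) = f u * t

section

variable {G : Type*} [Group G]

theorem IsHomogeneousDegreeOne.map_div {ι : Type*} {f : (ι → G) → G}
    (hf : IsHomogeneousDegreeOne f) (u : ι → G) (s : G) : f (fun i => u i / s) = f u / s := by
  simpa only [div_eq_mul_inv] using hf s⁻¹ u

theorem prod_map_range_eq_div_of_eq_div {A : Type*} [AddCommGroupWithOne A] {x t : A → G} {n : A}
    {m : ℕ} (ht : ∀ j < m, t (n - j) = x (n - j) / x (n - j - 1)) :
    ((List.range m).map fun j : ℕ => t (n - j)).prod = x n / x (n - m) := by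
  calc ((List.range m).map fun j : ℕ => t (n - j)).prod
      = ((List.range m).map fun j : ℕ => x (n - j) / x (n - (j + 1 : ℕ))).prod := by
        congr 1
        refine List.map_congr_left fun j hj => ?_
        rw [ht j (List.mem_range.mp hj), Nat.cast_succ, sub_add_eq_sub_sub]
    _ = x n / x (n - m) := by
        simpa only [Nat.cast_zero, sub_zero] using List.prod_range_div' m fun j : ℕ => x (n - j)

theorem IsHomogeneousDegreeOne.factor_equation {A : Type*} [AddCommGroupWithOne A] {k : ℕ}
    {f : (Fin (k + 1) → G) → G} (hf : IsHomogeneousDegreeOne f) {x t : A → G} {n : A}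
    (hx : x (n + 1) = f fun i => x (n - i.val))
    (ht : ∀ j < k, t (n - j) = x (n - j) / x (n - j - 1)) :
    x (n + 1) / x n =
      f fun i => (((List.range i.val).map fun j : ℕ => t (n - j)).prod)⁻¹ := by
  have telescope (i : Fin (k + 1)) :
      (((List.range i.val).map fun j : ℕ => t (n - j)).prod)⁻¹ = x (n - i.val) / x n := by
    rw [prod_map_range_eq_div_of_eq_div fun j hj => ht j (by omega), inv_div]
  simp only [telescope, hf.map_div, hx]

end

/-- Theorem 2 (SC factorization of HD1 equations): if each `f_n` is homogeneous of
degree 1 relative to `G` and `x` solves `x_{n+1} = f_n(x_n,…,x_{n-k})`, then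
`t_n = x_n * x_{n-1}⁻¹` solves the order-`k` factor equation
`t_{n+1} = f_n(1, t_n⁻¹, (t_n t_{n-1})⁻¹, …, (t_n ⋯ t_{n-k+1})⁻¹)`, together with the
cofactor equation `x_{n+1} = t_{n+1} * x_n`. -/
theorem stmt_4 {G : Type*} [Group G] (k : ℕ) (hk : 1 ≤ k)
    (f : ℕ → (Fin (k + 1) → G) → G)
    (hHD1 : ∀ (n : ℕ) (t : G) (u : Fin (k + 1) → G), f n (fun i => u i * t) = f n u * t)
    (x : ℤ → G)
    (hx : ∀ n : ℕ, x ((n : ℤ) + 1) = f n (fun i => x ((n : ℤ) - i.val)))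
    (t : ℤ → G)
    (ht : ∀ n : ℤ, -(k : ℤ) + 1 ≤ n → t n = x n * (x (n - 1))⁻¹) :
    ∀ n : ℕ,
      t ((n : ℤ) + 1) =
        f n (fun i => (((List.range i.val).map fun j => t ((n : ℤ) - j)).prod)⁻¹) ∧
      x ((n : ℤ) + 1) = t ((n : ℤ) + 1) * x (n : ℤ) := by
  intro n
  have ht_div (m : ℤ) (hm : -(k : ℤ) + 1 ≤ m) : t m = x m / x (m - 1) := by
    rw [ht m hm, div_eq_mul_inv]
  have ht_succ : t ((n : ℤ) + 1) = x ((n : ℤ) + 1) / x (n : ℤ) := by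
    rw [ht_div _ (by omega), add_sub_cancel_right]
  have factor := IsHomogeneousDegreeOne.factor_equation (hHD1 n) (hx n)
    fun j hj => ht_div ((n : ℤ) - j) (by omega)
  constructor
  -- In the statement `j` is an integer: `List.range` is cast to `List ℤ` through the list monad.
  · simpa only [ht_succ, List.pure_def, List.bind_eq_flatMap, ← List.map_eq_flatMap,
      List.map_map, Function.comp_def] using factor
  · rw [ht_succ, div_mul_cancel]
end

section
/- Let k ≥ 1, let φ_0, φ_1, …, φ_k : ℂ → ℂ be functions, let (α_n)_{n ≥ 0} be a sequence of complex numbers, and suppose there is a constant c ∈ ℂ such that for all z ∈ ℂ, c^{k+1} z - c^k φ_0(z) - c^{k-1} φ_1(z) - ⋯ - c φ_{k-1}(z) - φ_k(z) = 0. Define h_j(z) = c^j z - c^{j-1} φ_0(z) - c^{j-2} φ_1(z) - ⋯ - φ_{j-1}(z) for j = 1, …, k. If a sequence (x_n)_{n ≥ -k} of complex numbers satisfies the separable equation x_{n+1} = α_n + φ_0(x_n) + φ_1(x_{n-1}) + ⋯ + φ_k(x_{n-k}) for all n ≥ 0, then the sequence z_n := x_n + h_1(x_{n-1}) + h_2(x_{n-2})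 + ⋯ + h_k(x_{n-k}) satisfies, for all n ≥ 0, the first-order linear factor equation z_{n+1} = α_n + c z_n and the order-k cofactor equation x_{n+1} = z_{n+1} - h_1(x_n) - h_2(x_{n-1}) - ⋯ - h_k(x_{n-k+1}). -/
/-!
With `h_0 = id`, the maps `h_j` obey the Horner recursion `h_{j+1} = c h_j - φ_j`. Summing it along
`x_n, x_{n-1}, …, x_{n-k}` shows that `z_n = ∑_{j ≤ k} h_j(x_{n-j})` satisfies
`z_{n+1} = (x_{n+1} - ∑_{j ≤ k} φ_j(x_{n-j})) + c z_n - h_{k+1}(x_{n-k})` for every sequence `x`.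
The separable equation identifies the bracket with `α_n`, and the condition on `c` says exactly that
`h_{k+1} = 0`.
-/

section SeparableEquation

open Finset

variable {R M : Type*} [Monoid R] [AddCommGroup M] [DistribMulAction R M]

/-- The map `h_j` whose values at the delayed terms appear in the cofactor equation, extended to
every `j ≥ 0` so that `h_0 = id` starts the recursion and `h_{k+1} = 0` is the condition on `c`. -/
def cofactorMap (c : R) (φ : ℕ → M → M) (j : ℕ) (w : M) : M :=
  c ^ j • w - ∑ i ∈ range j, c ^ (j - 1 - i) • φ i w

/-- The variable `z_n` of the factor equation, written as `∑_{j ≤ k} h_j(x_{n-j})` with `h_0 = id`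
absorbing the leading term `x_n`. -/
def factorVariable (c : R) (φ : ℕ → M → M) (k : ℕ) (x : ℤ → M) (n : ℤ) : M :=
  ∑ j ∈ range (k + 1), cofactorMap c φ j (x (n - j))

theorem cofactorMap_zero (c : R) (φ : ℕ → M → M) (w : M) : cofactorMap c φ 0 w = w := by
  simp [cofactorMap]

theorem cofactorMap_succ (c : R) (φ : ℕ → M → M) (j : ℕ) (w : M) :
    cofactorMap c φ (j + 1) w = c • cofactorMap c φ j w - φ j w := by
  have hsum : ∑ i ∈ range j, c ^ (j - i) • φ i w =
      c • ∑ i ∈ range j, c ^ (j - 1 - i) • φ i w := by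
    rw [smul_sum]
    refine sum_congr rfl fun i hi => ?_
    have hexp : j - i = j - 1 - i + 1 := by have := mem_range.mp hi; omega
    rw [hexp, pow_succ', mul_smul]
  simp only [cofactorMap, sum_range_succ, Nat.add_sub_cancel, hsum, Nat.sub_self, pow_zero,
    one_smul, pow_succ', mul_smul, smul_sub]
  abel

theorem factorVariable_eq_add_sum_Icc (c : R) (φ : ℕ → M → M) (k : ℕ) (x : ℤ → M) (n : ℤ) :
    factorVariable c φ k x n = x n + ∑ j ∈ Icc 1 k, cofactorMap c φ j (x (n - j)) := by
  rw [factorVariable, sum_range_eq_add_Ico _ k.add_one_pos, Ico_add_one_right_eq_Icc,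
    cofactorMap_zero, Nat.cast_zero, sub_zero]

theorem factorVariable_add_one (c : R) (φ : ℕ → M → M) (k : ℕ) (x : ℤ → M) (n : ℤ) :
    factorVariable c φ k x (n + 1) =
      x (n + 1) - ∑ j ∈ range (k + 1), φ j (x (n - j)) + c • factorVariable c φ k x n -
        cofactorMap c φ (k + 1) (x (n - k)) := by
  have hshift : factorVariable c φ k x (n + 1) =
      ∑ j ∈ range k, cofactorMap c φ (j + 1) (x (n - j)) + x (n + 1) := by
    simp only [factorVariable, sum_range_succ', cofactorMap_zero, Nat.cast_add, Nat.cast_one,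
      Nat.cast_zero, sub_zero, add_sub_add_right_eq_sub]
  have hhorner : ∑ j ∈ range k, cofactorMap c φ (j + 1) (x (n - j)) +
      cofactorMap c φ (k + 1) (x (n - k)) =
        c • factorVariable c φ k x n - ∑ j ∈ range (k + 1), φ j (x (n - j)) := by
    rw [← sum_range_succ (fun j : ℕ => cofactorMap c φ (j + 1) (x (n - j)))]
    simp only [cofactorMap_succ, sum_sub_distrib, factorVariable, smul_sum]
  rw [hshift, eq_sub_of_add_eq hhorner]
  abel

theorem stmt_6_general (k : ℕ) (φ : ℕ → M → M) (α : ℕ → M) (c : R)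
    (hc : ∀ w : M, c ^ (k + 1) • w - ∑ j ∈ range (k + 1), c ^ (k - j) • φ j w = 0)
    (h : ℕ → M → M)
    (hdef : ∀ j, 1 ≤ j → j ≤ k → ∀ w : M,
      h j w = c ^ j • w - ∑ i ∈ range j, c ^ (j - 1 - i) • φ i w)
    (x : ℤ → M)
    (hx : ∀ n : ℕ, x ((n : ℤ) + 1) = α n + ∑ j ∈ range (k + 1), φ j (x ((n : ℤ) - j)))
    (z : ℤ → M)
    (hz : ∀ n : ℤ, 0 ≤ n → z n = x n + ∑ j ∈ Icc 1 k, h j (x (n - j))) (n : ℕ) :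
    z ((n : ℤ) + 1) = α n + c • z (n : ℤ) ∧
      x ((n : ℤ) + 1) = z ((n : ℤ) + 1) - ∑ j ∈ Icc 1 k, h j (x ((n : ℤ) + 1 - j)) := by
  have hz_eq (m : ℤ) (hm : 0 ≤ m) : z m = factorVariable c φ k x m := by
    rw [hz m hm, factorVariable_eq_add_sum_Icc]
    congr 1
    exact sum_congr rfl fun j hj => hdef j (mem_Icc.mp hj).1 (mem_Icc.mp hj).2 _
  have hlast (w : M) : cofactorMap c φ (k + 1) w = 0 := hc w
  constructor
  · rw [hz_eq _ (by positivity), hz_eq _ (by positivity), factorVariable_add_one, hlast, hx,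
      add_sub_cancel_right, sub_zero]
  · exact eq_sub_of_add_eq (hz _ (by positivity)).symm

end SeparableEquation

/-- Theorem 3: the separable equation `x_{n+1} = α_n + φ_0(x_n) + ⋯ + φ_k(x_{n-k})`
over ℂ, under the linear-combination condition
`c^{k+1} z - c^k φ_0(z) - ⋯ - φ_k(z) = 0`, has the type-(1,k) SC factorization
`z_{n+1} = α_n + c z_n`, `x_{n+1} = z_{n+1} - h_1(x_n) - ⋯ - h_k(x_{n-k+1})`,
where `z_n = x_n + h_1(x_{n-1}) + ⋯ + h_k(x_{n-k})` and
`h_j(z) = c^j z - c^{j-1} φ_0(z) - ⋯ - φ_{j-1}(z)`. -/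
theorem stmt_6 (k : ℕ) (hk : 1 ≤ k) (φ : ℕ → ℂ → ℂ) (α : ℕ → ℂ) (c : ℂ)
    (hc : ∀ w : ℂ, c ^ (k + 1) * w - ∑ j ∈ Finset.range (k + 1), c ^ (k - j) * φ j w = 0)
    (h : ℕ → ℂ → ℂ)
    (hdef : ∀ j, 1 ≤ j → j ≤ k → ∀ w : ℂ,
      h j w = c ^ j * w - ∑ i ∈ Finset.range j, c ^ (j - 1 - i) * φ i w)
    (x : ℤ → ℂ)
    (hx : ∀ n : ℕ, x ((n : ℤ) + 1) = α n + ∑ j ∈ Finset.range (k + 1), φ j (x ((n : ℤ) - j)))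
    (z : ℤ → ℂ)
    (hz : ∀ n : ℤ, 0 ≤ n → z n = x n + ∑ j ∈ Finset.Icc 1 k, h j (x (n - j))) :
    ∀ n : ℕ,
      z ((n : ℤ) + 1) = α n + c * z (n : ℤ) ∧
      x ((n : ℤ) + 1) = z ((n : ℤ) + 1) - ∑ j ∈ Finset.Icc 1 k, h j (x ((n : ℤ) + 1 - j)) :=
  stmt_6_general k φ α c hc h hdef x hx z hz
end

section
/- Let k ≥ 0, let b_0, …, b_k ∈ ℂ, let (α_n)_{n ≥ 0} be a sequence of complex numbers, and let c_0, c_1, …, c_k ∈ ℂ be such that the polynomial identity z^{k+1} + b_0 z^k + b_1 z^{k-1} + ⋯ + b_{k-1} z + b_k = (z - c_0)(z - c_1)⋯(z - c_k) holds (i.e., c_0, …, c_k are the eigenvalues, listed with multiplicity). Suppose sequences z_{0,n}, z_{1,n}, …, z_{k,n} of complex numbers satisfy the triangular system: for all n ≥ 0, z_{0,n+1} = α_n + c_0 z_{0,n} and z_{j,n+1} = z_{j-1,n+1} + c_j z_{j,n} for j = 1, …, k. Then the sequence x_n := z_{k,n} satisfies the linear non-homogeneous equation of order k+1: for all n ≥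 0, x_{n+k+1} + b_0 x_{n+k} + b_1 x_{n+k-1} + ⋯ + b_k x_n = α_{n+k}. -/
/-!
Write `E` for the shift of sequences. The triangular system says `(E - c₀) z₀ = α` and
`(E - c_{j+1}) z_{j+1} = E z_j`. Since polynomials in `E` commute, applying the remaining factors
to these relations one after the other gives `(E - c₀) ⋯ (E - c_k) z_k = E ^ k α`. The product is
the characteristic polynomial evaluated at `E`, and evaluating both sides at `n` is the equation of
order `k + 1`.
-/

open Polynomial Finset

section Triangular

variable {R V : Type*} [CommRing R] [AddCommGroup V] [Module R V]

theorem aeval_X_sub_C_apply (T : Module.End R V) (r : R) (v : V) :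
    aeval T (X - C r) v = T v - r • v := by
  simp only [map_sub, aeval_X, aeval_C, LinearMap.sub_apply, Module.algebraMap_end_apply]

theorem aeval_prod_X_sub_C_apply_of_triangular {T : Module.End R V} {c : ℕ → R} {v : ℕ → V}
    {a : V} {k : ℕ} (hzero : T (v 0) = a + c 0 • v 0)
    (hsucc : ∀ j < k, T (v (j + 1)) = T (v j) + c (j + 1) • v (j + 1)) :
    aeval T (∏ j ∈ range (k + 1), (X - C (c j))) (v k) = (T ^ k) a := by
  induction k with
  | zero =>
    rw [zero_add, prod_range_one, aeval_X_sub_C_apply, hzero, add_sub_cancel_right, pow_zero,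
      Module.End.one_apply]
  | succ k ih =>
    set p := ∏ j ∈ range (k + 1), (X - C (c j))
    have factor_apply : aeval T (X - C (c (k + 1))) (v (k + 1)) = T (v k) := by
      rw [aeval_X_sub_C_apply, hsucc k k.lt_succ_self, add_sub_cancel_right]
    have commute_prod : Commute (aeval T p) T := by
      simpa only [aeval_X] using (Commute.all p X).map (aeval T)
    calc aeval T (∏ j ∈ range (k + 2), (X - C (c j))) (v (k + 1))
        = aeval T p (T (v k)) := by
          rw [prod_range_succ, map_mul, Module.End.mul_apply, factor_apply]
      _ = T (aeval T p (v k)) := LinearMap.congr_fun commute_prod.eq (v k)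
      _ = (T ^ (k + 1)) a := by
          rw [ih fun j hj ↦ hsucc j (hj.trans k.lt_succ_self), pow_succ', Module.End.mul_apply]

end Triangular

section SeqShift

variable (R M : Type*) [Semiring R] [AddCommMonoid M] [Module R M]

/-- The shift operator `x ↦ (n ↦ x (n + 1))` on sequences in an `R`-module. Evaluating polynomials
at it turns linear difference equations with constant coefficients into polynomial identities. -/
def seqShift : Module.End R (ℕ → M) :=
  LinearMap.funLeft R M Nat.succ

variable {M}

theorem seqShift_apply (x : ℕ → M) (n : ℕ) : seqShift R M x n = x (n + 1) :=
  rfl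

theorem seqShift_pow_apply (m : ℕ) (x : ℕ → M) (n : ℕ) : (seqShift R M ^ m) x n = x (n + m) := by
  induction m generalizing n with
  | zero => rfl
  | succ m ih => rw [pow_succ', Module.End.mul_apply, seqShift_apply, ih, add_right_comm, add_assoc]

end SeqShift

/-- The characteristic polynomial `X ^ (k + 1) + b₀ X ^ k + ⋯ + b_k` of the difference equation
`x (n + 1) + b₀ x n + ⋯ + b_k x (n - k) = α n`. Only `b 0, …, b k` matter; as in the equation, the
coefficients are listed from the highest power downwards. -/
noncomputable def differenceCharPoly {R : Type*} [Semiring R] (k : ℕ) (b : ℕ → R) : R[X] :=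
  X ^ (k + 1) + ∑ j ∈ range (k + 1), C (b j) * X ^ (k - j)

theorem aeval_seqShift_differenceCharPoly_apply {R M : Type*} [CommSemiring R] [AddCommMonoid M]
    [Module R M] (k : ℕ) (b : ℕ → R) (x : ℕ → M) (n : ℕ) :
    aeval (seqShift R M) (differenceCharPoly k b) x n =
      x (n + k + 1) + ∑ j ∈ range (k + 1), b j • x (n + k - j) := by
  simp only [differenceCharPoly, map_add, map_sum, map_mul, map_pow, aeval_X, aeval_C,
    LinearMap.add_apply, LinearMap.sum_apply, Pi.add_apply, Finset.sum_apply, Module.End.mul_apply,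
    Module.algebraMap_end_apply, Pi.smul_apply, seqShift_pow_apply, ← add_assoc]
  congr 1
  refine sum_congr rfl fun j hj ↦ ?_
  rw [Nat.add_sub_assoc (mem_range_succ_iff.mp hj)]

theorem differenceCharPoly_eq_prod_of_forall_eval {R : Type*} [CommRing R] [IsDomain R]
    [Infinite R] {k : ℕ} {b c : ℕ → R}
    (h : ∀ w : R, w ^ (k + 1) + ∑ j ∈ range (k + 1), b j * w ^ (k - j) =
      ∏ j ∈ range (k + 1), (w - c j)) :
    differenceCharPoly k b = ∏ j ∈ range (k + 1), (X - C (c j)) :=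
  Polynomial.funext fun w ↦ by
    simpa only [differenceCharPoly, eval_add, eval_pow, eval_X, eval_finsetSum, eval_mul, eval_C,
      eval_prod, eval_sub] using h w

theorem stmt_7_general {R M : Type*} [CommRing R] [AddCommGroup M] [Module R M] {k : ℕ}
    {b c : ℕ → R} {α : ℕ → M} {z : ℕ → ℕ → M}
    (hpoly : differenceCharPoly k b = ∏ j ∈ range (k + 1), (X - C (c j)))
    (hzero : ∀ n, z 0 (n + 1) = α n + c 0 • z 0 n)
    (hsucc : ∀ n, ∀ j < k, z (j + 1) (n + 1) = z j (n + 1) + c (j + 1) • z (j + 1) n) (n : ℕ) :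
    z k (n + k + 1) + ∑ j ∈ range (k + 1), b j • z k (n + k - j) = α (n + k) := by
  have operator_eq : aeval (seqShift R M) (differenceCharPoly k b) (z k) = (seqShift R M ^ k) α :=
    hpoly ▸ aeval_prod_X_sub_C_apply_of_triangular (funext hzero)
      fun j hj ↦ funext fun i ↦ hsucc i j hj
  rw [← aeval_seqShift_differenceCharPoly_apply, operator_eq, seqShift_pow_apply]

/-- Corollary 1 (one direction): any solution of the triangular system of `k+1`
first-order linear non-homogeneous equations, whose coefficients `c_0,…,c_k` are the
eigenvalues (roots of the characteristic polynomial listed with multiplicity), yields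
via `x_n = z_{k,n}` a solution of the linear non-homogeneous equation of order `k+1`. -/
theorem stmt_7 (k : ℕ) (b : ℕ → ℂ) (α : ℕ → ℂ) (c : ℕ → ℂ)
    (hpoly : ∀ w : ℂ, w ^ (k + 1) + ∑ j ∈ Finset.range (k + 1), b j * w ^ (k - j) =
      ∏ j ∈ Finset.range (k + 1), (w - c j))
    (z : ℕ → ℕ → ℂ)
    (h0 : ∀ n : ℕ, z 0 (n + 1) = α n + c 0 * z 0 n)
    (hj : ∀ n : ℕ, ∀ j, 1 ≤ j → j ≤ k → z j (n + 1) = z (j - 1) (n + 1) + c j * z j n) :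
    ∀ n : ℕ,
      z k (n + k + 1) + ∑ j ∈ Finset.range (k + 1), b j * z k (n + k - j) = α (n + k) :=
  stmt_7_general (differenceCharPoly_eq_prod_of_forall_eval hpoly) h0
    fun n j hjk ↦ hj n (j + 1) j.succ_pos hjk
end

section
/- Let k ≥ 1, let ψ_0, ψ_1, …, ψ_k : (0,∞) → (0,∞) be functions, let (β_n)_{n ≥ 0} be a sequence of positive real numbers, and suppose there is c ∈ ℝ such that for all t > 0, ψ_0(t)^{c^k} · ψ_1(t)^{c^{k-1}} ⋯ ψ_{k-1}(t)^{c} · ψ_k(t) = t^{c^{k+1}} (real powers). Define h_j(t) := t^{c^j} · ∏_{i=0}^{j-1} ψ_i(t)^{-c^{j-1-i}} for j = 1, …, k and t > 0. If a sequence (y_n)_{n ≥ -k} of positive real numbers satisfies the multiplicative separable equation y_{n+1} = β_n ψ_0(y_n) ψ_1(y_{n-1}) ⋯ ψ_k(y_{n-k}) for all n ≥ 0, then the sequence r_n := y_n · h_1(y_{n-1}) · h_2(y_{n-2}) ⋯ h_k(y_{n-k}) satisfies, for all n ≥ 0, the first-order factor equation r_{n+1} = β_n r_n^c and the order-k cofactor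 equation y_{n+1} = r_{n+1} / (h_1(y_n) h_2(y_{n-1}) ⋯ h_k(y_{n-k+1})). -/
/-!
The functions `h_j` extend to `j = 0` and `j = k + 1` with `h_0 (t) = t`, and they satisfy
`h_j (t) ^ c = ψ_j (t) h_{j+1} (t)`. The condition on `ψ` and `c` says exactly that `h_{k+1} = 1`.
Raising `r_n = ∏_{j ≤ k} h_j (y_{n-j})` to the power `c` therefore splits off the factor
`∏_{j ≤ k} ψ_j (y_{n-j}) = y_{n+1} / β_n` and moves every index up by one, which leaves
`r_{n+1} / β_n`.
-/

open Finset

section SymmetryFactor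

variable {ψ : ℕ → ℝ → ℝ} {c t : ℝ} {j : ℕ}

/-- The factor `h_j` of the form symmetry of the multiplicative separable equation with
right-hand side `∏ ψ_i` and exponent `c`. It is defined for every `j`, so that the boundary
values `h_0` and `h_{k+1}` are available. -/
noncomputable def symmetryFactor (ψ : ℕ → ℝ → ℝ) (c : ℝ) (j : ℕ) (t : ℝ) : ℝ :=
  t ^ (c ^ j) * ∏ i ∈ range j, ψ i t ^ (-(c ^ (j - 1 - i)))

@[simp]
lemma symmetryFactor_zero : symmetryFactor ψ c 0 t = t := by
  simp [symmetryFactor]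

lemma symmetryFactor_pos (ht : 0 < t) (hψ : ∀ i < j, 0 < ψ i t) : 0 < symmetryFactor ψ c j t :=
  mul_pos (Real.rpow_pos_of_pos ht _) <|
    prod_pos fun i hi => Real.rpow_pos_of_pos (hψ i (mem_range.1 hi)) _

lemma symmetryFactor_eq_div (hψ : ∀ i < j, 0 ≤ ψ i t) :
    symmetryFactor ψ c j t = t ^ (c ^ j) / ∏ i ∈ range j, ψ i t ^ (c ^ (j - 1 - i)) := by
  rw [symmetryFactor, div_eq_mul_inv, ← prod_inv_distrib]
  congr 1
  exact prod_congr rfl fun i hi => Real.rpow_neg (hψ i (mem_range.1 hi)) _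

lemma symmetryFactor_eq_one_iff (hψ : ∀ i < j, 0 < ψ i t) :
    symmetryFactor ψ c j t = 1 ↔ ∏ i ∈ range j, ψ i t ^ (c ^ (j - 1 - i)) = t ^ (c ^ j) := by
  have prod_ne_zero : ∏ i ∈ range j, ψ i t ^ (c ^ (j - 1 - i)) ≠ 0 :=
    (prod_pos fun i hi => Real.rpow_pos_of_pos (hψ i (mem_range.1 hi)) _).ne'
  rw [symmetryFactor_eq_div fun i hi => (hψ i hi).le, div_eq_one_iff_eq prod_ne_zero, eq_comm]

lemma symmetryFactor_rpow (ht : 0 ≤ t) (hψ : ∀ i < j, 0 ≤ ψ i t) (hψj : 0 < ψ j t) :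
    symmetryFactor ψ c j t ^ c = ψ j t * symmetryFactor ψ c (j + 1) t := by
  have rpow_nonneg : ∀ i ∈ range j, 0 ≤ ψ i t ^ (-(c ^ (j - 1 - i))) := fun i hi =>
    Real.rpow_nonneg (hψ i (mem_range.1 hi)) _
  have rpow_rpow : ∀ i ∈ range j,
      (ψ i t ^ (-(c ^ (j - 1 - i)))) ^ c = ψ i t ^ (-(c ^ (j - i))) := by
    intro i hi
    have hij := mem_range.1 hi
    rw [← Real.rpow_mul (hψ i hij), neg_mul, ← pow_succ, show j - 1 - i + 1 = j - i by omega]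
  calc
    symmetryFactor ψ c j t ^ c = t ^ (c ^ (j + 1)) * ∏ i ∈ range j, ψ i t ^ (-(c ^ (j - i))) := by
      rw [symmetryFactor, Real.mul_rpow (Real.rpow_nonneg ht _) (prod_nonneg rpow_nonneg),
        ← Real.finsetProd_rpow _ _ rpow_nonneg, prod_congr rfl rpow_rpow, ← Real.rpow_mul ht,
        ← pow_succ]
    _ = ψ j t * symmetryFactor ψ c (j + 1) t := by
      simp only [symmetryFactor, prod_range_succ, Nat.add_sub_cancel, Nat.sub_self, pow_zero,
        Real.rpow_neg_one]
      field_simp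

end SymmetryFactor

section FormSymmetry

variable {ψ : ℕ → ℝ → ℝ} {c b : ℝ} {k : ℕ}

/-- The form symmetry `H(x_0, …, x_k) = x_0 h_1(x_1) ⋯ h_k(x_k)`, which reduces the separable
equation of order `k + 1` to a first-order equation. The state vector is encoded as a sequence
of which only the first `k + 1` entries matter; in the application `x_j = y_{n-j}`. -/
noncomputable def formSymmetry (ψ : ℕ → ℝ → ℝ) (c : ℝ) (k : ℕ) (x : ℕ → ℝ) : ℝ :=
  ∏ j ∈ range (k + 1), symmetryFactor ψ c j (x j)

lemma formSymmetry_eq_mul_prod_Icc (x : ℕ → ℝ) :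
    formSymmetry ψ c k x = x 0 * ∏ j ∈ Icc 1 k, symmetryFactor ψ c j (x j) := by
  rw [formSymmetry, prod_range_eq_mul_Ico _ k.succ_pos, symmetryFactor_zero,
    Nat.succ_eq_add_one, Ico_add_one_right_eq_Icc]

lemma eq_formSymmetry_div_prod_Icc {x : ℕ → ℝ} (hx : ∀ j ∈ Icc 1 k, 0 < x j)
    (hψ : ∀ j ∈ Icc 1 k, ∀ i < j, 0 < ψ i (x j)) :
    x 0 = formSymmetry ψ c k x / ∏ j ∈ Icc 1 k, symmetryFactor ψ c j (x j) := by
  have prod_ne_zero : ∏ j ∈ Icc 1 k, symmetryFactor ψ c j (x j) ≠ 0 :=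
    (prod_pos fun j hj => symmetryFactor_pos (hx j hj) (hψ j hj)).ne'
  rw [formSymmetry_eq_mul_prod_Icc, mul_div_cancel_right₀ _ prod_ne_zero]

lemma formSymmetry_rpow {x : ℕ → ℝ} (hx : ∀ j ≤ k, 0 < x j)
    (hψ : ∀ j ≤ k, ∀ i ≤ j, 0 < ψ i (x j)) :
    formSymmetry ψ c k x ^ c =
      (∏ j ∈ range (k + 1), ψ j (x j)) * ∏ j ∈ range (k + 1), symmetryFactor ψ c (j + 1) (x j) := by
  have factor_nonneg : ∀ j ∈ range (k + 1), 0 ≤ symmetryFactor ψ c j (x j) := fun j hj =>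
    have hjk := mem_range_succ_iff.1 hj
    (symmetryFactor_pos (hx j hjk) fun i hi => hψ j hjk i hi.le).le
  rw [formSymmetry, ← Real.finsetProd_rpow _ _ factor_nonneg, ← prod_mul_distrib]
  refine prod_congr rfl fun j hj => ?_
  have hjk := mem_range_succ_iff.1 hj
  exact symmetryFactor_rpow (hx j hjk).le (fun i hi => (hψ j hjk i hi.le).le) (hψ j hjk j le_rfl)

/-- The semiconjugacy relation: `x` is the state vector following `(x_1, …, x_{k+1})`. -/
theorem formSymmetry_eq_mul_rpow {x : ℕ → ℝ} (hx : ∀ j ≤ k, 0 < x (j + 1))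
    (hψ : ∀ j ≤ k, ∀ i ≤ j, 0 < ψ i (x (j + 1)))
    (hlast : symmetryFactor ψ c (k + 1) (x (k + 1)) = 1)
    (hstep : x 0 = b * ∏ j ∈ range (k + 1), ψ j (x (j + 1))) :
    formSymmetry ψ c k x = b * formSymmetry ψ c k (fun j => x (j + 1)) ^ c := by
  calc
    formSymmetry ψ c k x = x 0 * ∏ j ∈ range (k + 1), symmetryFactor ψ c (j + 1) (x (j + 1)) := by
      rw [formSymmetry, prod_range_succ', symmetryFactor_zero, mul_comm, prod_range_succ, hlast,
        mul_one]
    _ = b * formSymmetry ψ c k (fun j => x (j + 1)) ^ c := by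
      rw [formSymmetry_rpow hx hψ, hstep, mul_assoc]

theorem formSymmetry_delays_succ {y : ℤ → ℝ} {n : ℤ} (hy : ∀ j ≤ k, 0 < y (n - j))
    (hψ : ∀ j ≤ k, ∀ i ≤ j, 0 < ψ i (y (n - j)))
    (hlast : symmetryFactor ψ c (k + 1) (y (n - k)) = 1)
    (hstep : y (n + 1) = b * ∏ j ∈ range (k + 1), ψ j (y (n - j))) :
    formSymmetry ψ c k (fun j => y (n + 1 - j)) =
      b * formSymmetry ψ c k (fun j => y (n - j)) ^ c := by
  have y_shift (j : ℕ) : y (n + 1 - (j + 1 : ℕ)) = y (n - j) := by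
    rw [Nat.cast_succ, add_sub_add_right_eq_sub]
  simp only [← y_shift] at hy hψ hlast hstep ⊢
  exact formSymmetry_eq_mul_rpow (x := fun j => y (n + 1 - j)) hy hψ hlast (by simpa using hstep)

end FormSymmetry

/-- Corollary 2: the multiplicative separable equation
`y_{n+1} = β_n ψ_0(y_n) ⋯ ψ_k(y_{n-k})` on `(0,∞)`, under the condition
`ψ_0(t)^{c^k} ⋯ ψ_k(t) = t^{c^{k+1}}`, has the type-(1,k) SC factorization
`r_{n+1} = β_n r_n^c`, `y_{n+1} = r_{n+1}/(h_1(y_n) ⋯ h_k(y_{n-k+1}))`, where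
`r_n = y_n h_1(y_{n-1}) ⋯ h_k(y_{n-k})` and
`h_j(t) = t^{c^j} ∏_{i<j} ψ_i(t)^{-c^{j-1-i}}` (real powers). -/
theorem stmt_10 (k : ℕ) (hk : 1 ≤ k) (ψ : ℕ → ℝ → ℝ)
    (hψ : ∀ j ≤ k, ∀ t : ℝ, 0 < t → 0 < ψ j t)
    (β : ℕ → ℝ) (hβ : ∀ n, 0 < β n) (c : ℝ)
    (hc : ∀ t : ℝ, 0 < t →
      ∏ j ∈ Finset.range (k + 1), (ψ j t) ^ (c ^ (k - j)) = t ^ (c ^ (k + 1)))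
    (h : ℕ → ℝ → ℝ)
    (hdef : ∀ j, 1 ≤ j → j ≤ k → ∀ t : ℝ, 0 < t →
      h j t = t ^ (c ^ j) * ∏ i ∈ Finset.range j, (ψ i t) ^ (-(c ^ (j - 1 - i))))
    (y : ℤ → ℝ) (hypos : ∀ n : ℤ, -(k : ℤ) ≤ n → 0 < y n)
    (hy : ∀ n : ℕ, y ((n : ℤ) + 1) = β n * ∏ j ∈ Finset.range (k + 1), ψ j (y ((n : ℤ) - j)))
    (r : ℤ → ℝ)
    (hr : ∀ n : ℤ, 0 ≤ n → r n = y n * ∏ j ∈ Finset.Icc 1 k, h j (y (n - j))) :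
    ∀ n : ℕ,
      r ((n : ℤ) + 1) = β n * (r (n : ℤ)) ^ c ∧
      y ((n : ℤ) + 1) = r ((n : ℤ) + 1) / ∏ j ∈ Finset.Icc 1 k, h j (y ((n : ℤ) + 1 - j)) := by
  have cofactor_eq : ∀ m : ℤ, 0 ≤ m → ∏ j ∈ Icc 1 k, h j (y (m - j)) =
      ∏ j ∈ Icc 1 k, symmetryFactor ψ c j (y (m - j)) := fun m hm => prod_congr rfl fun j hj => by
    obtain ⟨one_le_j, j_le_k⟩ := mem_Icc.1 hj
    exact hdef j one_le_j j_le_k _ (hypos _ (by omega))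
  have r_eq : ∀ m : ℤ, 0 ≤ m → r m = formSymmetry ψ c k fun j => y (m - j) := fun m hm => by
    rw [hr m hm, cofactor_eq m hm, formSymmetry_eq_mul_prod_Icc, Nat.cast_zero, sub_zero]
  have last_eq_one : ∀ t : ℝ, 0 < t → symmetryFactor ψ c (k + 1) t = 1 := fun t ht =>
    (symmetryFactor_eq_one_iff fun i hi => hψ i (Nat.le_of_lt_succ hi) t ht).2 (hc t ht)
  have y_pos : ∀ m : ℤ, 0 ≤ m → ∀ j ≤ k, 0 < y (m - j) := fun m hm j hj => hypos _ (by omega)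
  intro n
  have n_nonneg : (0 : ℤ) ≤ n := n.cast_nonneg
  have succ_nonneg : (0 : ℤ) ≤ n + 1 := by omega
  constructor
  · rw [r_eq _ n_nonneg, r_eq _ succ_nonneg]
    exact formSymmetry_delays_succ (y_pos n n_nonneg)
      (fun j hj i hi => hψ i (hi.trans hj) _ (y_pos n n_nonneg j hj))
      (last_eq_one _ (y_pos n n_nonneg k le_rfl)) (hy n)
  · have y_pos_succ : ∀ j ∈ Icc 1 k, 0 < y ((n : ℤ) + 1 - j) := fun j hj =>
      y_pos _ succ_nonneg j (mem_Icc.1 hj).2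
    rw [r_eq _ succ_nonneg, cofactor_eq _ succ_nonneg]
    simpa only [Nat.cast_zero, sub_zero] using
      eq_formSymmetry_div_prod_Icc (x := fun j => y ((n : ℤ) + 1 - j)) y_pos_succ
        fun j hj i hi => hψ i (hi.le.trans (mem_Icc.1 hj).2) _ (y_pos_succ j hj)
end

section
/- Let k ≥ 1, let (a_n)_{n ≥ 0} and (b_n)_{n ≥ 0} be sequences of positive real numbers with lim_{n→∞} a_n = a > 0 and lim_{n→∞} b_n = b ≥ 0, and assume a + b ≠ 1. Let (x_n)_{n ≥ -k} be any sequence of positive real numbers satisfying x_{n+1} = x_n (a_n x_{n-k+1} / x_{n-k} + b_n) for all n ≥ 0. Then: if a + b < 1, lim_{n→∞} x_n = 0; and if a + b > 1, lim_{n→∞} x_n = ∞. -/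
/-!
The ratios `t n = x n / x (n - 1)` satisfy `t (n + k) = a n * t n + b n` after a shift of the index.
Since `a, b ≥ 0`, the right-hand side lies between `(a n + b n) * min (t n) 1` and
`(a n + b n) * max (t n) 1`. So if eventually `a n + b n ≤ q < 1`, then along each residue class
modulo `k` the ratio contracts by the factor `q` as long as it exceeds `1`, and stays below `q` from
then on; the case `a n + b n ≥ q > 1` is the same argument for `1 / t`. Hence `x` eventually decays,
respectively grows, geometrically.
-/

open Filter Topology

section Filters

theorem eventually_atTop_of_forall_eventually_mul_add {k : ℕ} (hk : 0 < k) {p : ℕ → Prop}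
    (h : ∀ r < k, ∀ᶠ j in atTop, p (k * j + r)) : ∀ᶠ n in atTop, p n := by
  have hall : ∀ᶠ j in atTop, ∀ r ∈ Set.Iio k, p (k * j + r) :=
    (eventually_all_finite (Set.finite_Iio k)).2 h
  filter_upwards [(Nat.tendsto_div_const_atTop hk.ne').eventually hall] with n hn
  simpa only [Nat.div_add_mod] using hn (n % k) (Nat.mod_lt n hk)

theorem map_natCast_int_atTop : map ((↑) : ℕ → ℤ) atTop = atTop :=
  map_atTop_eq_of_gc Int.toNat 0 Nat.mono_cast (fun _ _ _ ↦ by lia) (fun _ _ ↦ by lia)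

end Filters

section AffineBounds

variable {R : Type*} [Semiring R] [LinearOrder R] [IsOrderedRing R] {a b : R}

theorem mul_add_le_add_mul_max_one (ha : 0 ≤ a) (hb : 0 ≤ b) (t : R) :
    a * t + b ≤ (a + b) * max t 1 := by
  rw [add_mul]
  gcongr
  · exact le_max_left t 1
  · exact le_mul_of_one_le_right hb (le_max_right t 1)

theorem add_mul_min_one_le_mul_add (ha : 0 ≤ a) (hb : 0 ≤ b) (t : R) :
    (a + b) * min t 1 ≤ a * t + b := by
  rw [add_mul]
  gcongr
  · exact min_le_left t 1
  · exact mul_le_of_le_one_right hb (min_le_right t 1)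

end AffineBounds

section DelayInequalities

variable {K : Type*} [Field K] [LinearOrder K] [IsStrictOrderedRing K] [Archimedean K]
  {q : K} {k : ℕ}

theorem eventually_le_of_succ_le_mul_max_one {u : ℕ → K} (hq₀ : 0 ≤ q) (hq₁ : q < 1)
    (hu : ∀ᶠ n in atTop, u (n + 1) ≤ q * max (u n) 1) : ∀ᶠ n in atTop, u n ≤ q := by
  obtain ⟨N, hN⟩ := eventually_atTop.1 hu
  set C := max (u N) 1
  have hC : 0 < C := lt_max_of_lt_right one_pos
  have hbound (i : ℕ) : u (N + i) ≤ max (q ^ i * C) 1 := by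
    induction i with
    | zero => simp [C]
    | succ i ih =>
      calc u (N + i + 1) ≤ q * max (u (N + i)) 1 := hN _ (Nat.le_add_right N i)
        _ ≤ q * max (q ^ i * C) 1 := mul_le_mul_of_nonneg_left (max_le ih (le_max_right _ _)) hq₀
        _ = max (q ^ (i + 1) * C) q := by
          rw [mul_max_of_nonneg _ _ hq₀, mul_one, pow_succ', mul_assoc]
        _ ≤ max (q ^ (i + 1) * C) 1 := by gcongr
  obtain ⟨m, hm⟩ := exists_pow_lt_of_lt_one (inv_pos.2 hC) hq₁
  have hle_one (i : ℕ) (hi : m ≤ i) : u (N + i) ≤ 1 := by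
    refine (hbound i).trans (max_le ?_ le_rfl)
    calc q ^ i * C ≤ q ^ m * C := by gcongr ?_ * C; exact pow_le_pow_of_le_one hq₀ hq₁.le hi
      _ ≤ C⁻¹ * C := by gcongr
      _ = 1 := inv_mul_cancel₀ hC.ne'
  refine eventually_atTop.2 ⟨N + m + 1, fun n hn ↦ ?_⟩
  obtain ⟨i, rfl⟩ := Nat.exists_eq_add_of_le hn
  have h := hN (N + (m + i)) (Nat.le_add_right N _)
  rw [max_eq_right (hle_one (m + i) (Nat.le_add_right m i)), mul_one] at h
  convert h using 2
  ring

theorem eventually_le_of_delay_le_mul_max_one {u : ℕ → K} (hk : 0 < k) (hq₀ : 0 ≤ q) (hq₁ : q < 1)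
    (hu : ∀ᶠ n in atTop, u (n + k) ≤ q * max (u n) 1) : ∀ᶠ n in atTop, u n ≤ q := by
  refine eventually_atTop_of_forall_eventually_mul_add hk fun r _ ↦ ?_
  refine eventually_le_of_succ_le_mul_max_one (u := fun j ↦ u (k * j + r)) hq₀ hq₁ ?_
  have hclass : Tendsto (fun j ↦ k * j + r) atTop atTop :=
    (tendsto_add_atTop_nat r).comp (tendsto_id.const_mul_atTop' hk)
  filter_upwards [hclass.eventually hu] with j hj
  rwa [mul_add_one, add_right_comm]

theorem eventually_ge_of_mul_min_one_le_delay {t : ℕ → K} (hk : 0 < k) (hq : 1 < q)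
    (ht₀ : ∀ n, 0 < t n) (ht : ∀ᶠ n in atTop, q * min (t n) 1 ≤ t (n + k)) :
    ∀ᶠ n in atTop, q ≤ t n := by
  have hq₀ : 0 < q := one_pos.trans hq
  have hinv : ∀ᶠ n in atTop, (t n)⁻¹ ≤ q⁻¹ := by
    refine eventually_le_of_delay_le_mul_max_one hk (inv_pos.2 hq₀).le (inv_lt_one_of_one_lt₀ hq) ?_
    filter_upwards [ht] with n hn
    have hmin : 0 < min (t n) 1 := lt_min (ht₀ n) one_pos
    calc (t (n + k))⁻¹ ≤ (q * min (t n) 1)⁻¹ := inv_anti₀ (mul_pos hq₀ hmin) hn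
      _ = q⁻¹ * (min (t n) 1)⁻¹ := mul_inv _ _
      _ ≤ q⁻¹ * max (t n)⁻¹ 1 := by
        gcongr
        rcases min_choice (t n) 1 with h | h <;> simp [h]
  filter_upwards [hinv] with n hn using (inv_le_inv₀ (ht₀ n) hq₀).1 hn

variable {a b t : ℕ → K}

theorem eventually_le_of_delay_le_mul_add (hk : 0 < k) (ha : ∀ᶠ n in atTop, 0 ≤ a n)
    (hb : ∀ᶠ n in atTop, 0 ≤ b n) (hq : q < 1) (hab : ∀ᶠ n in atTop, a n + b n ≤ q)
    (ht : ∀ᶠ n in atTop, t (n + k) ≤ a n * t n + b n) : ∀ᶠ n in atTop, t n ≤ q := by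
  obtain ⟨n, han, hbn, habn⟩ := (ha.and (hb.and hab)).exists
  refine eventually_le_of_delay_le_mul_max_one hk ((add_nonneg han hbn).trans habn) hq ?_
  filter_upwards [ha, hb, hab, ht] with n han hbn habn htn
  calc t (n + k) ≤ a n * t n + b n := htn
    _ ≤ (a n + b n) * max (t n) 1 := mul_add_le_add_mul_max_one han hbn (t n)
    _ ≤ q * max (t n) 1 := by gcongr

theorem eventually_ge_of_mul_add_le_delay (hk : 0 < k) (ha : ∀ᶠ n in atTop, 0 ≤ a n)
    (hb : ∀ᶠ n in atTop, 0 ≤ b n) (hq : 1 < q) (hab : ∀ᶠ n in atTop, q ≤ a n + b n)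
    (ht₀ : ∀ n, 0 < t n) (ht : ∀ᶠ n in atTop, a n * t n + b n ≤ t (n + k)) :
    ∀ᶠ n in atTop, q ≤ t n := by
  refine eventually_ge_of_mul_min_one_le_delay hk hq ht₀ ?_
  filter_upwards [ha, hb, hab, ht] with n han hbn habn htn
  have hmin : 0 ≤ min (t n) 1 := le_min (ht₀ n).le zero_le_one
  calc q * min (t n) 1 ≤ (a n + b n) * min (t n) 1 := by gcongr
    _ ≤ a n * t n + b n := add_mul_min_one_le_mul_add han hbn (t n)
    _ ≤ t (n + k) := htn

end DelayInequalities

section GeometricComparison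

variable {y : ℕ → ℝ} {q : ℝ}

theorem tendsto_zero_of_eventually_succ_le_mul (hq : q < 1) (hy₀ : ∀ᶠ n in atTop, 0 ≤ y n)
    (hy : ∀ᶠ n in atTop, y (n + 1) ≤ q * y n) : Tendsto y atTop (𝓝 0) := by
  refine (summable_of_ratio_norm_eventually_le hq ?_).tendsto_atTop_zero
  filter_upwards [hy₀, (tendsto_add_atTop_nat 1).eventually hy₀, hy] with n hn hn' hle
  rwa [Real.norm_of_nonneg hn, Real.norm_of_nonneg hn']

theorem tendsto_atTop_of_eventually_mul_le_succ (hq : 1 < q) (hy₀ : ∀ᶠ n in atTop, 0 < y n)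
    (hy : ∀ᶠ n in atTop, q * y n ≤ y (n + 1)) : Tendsto y atTop atTop := by
  obtain ⟨N, hN⟩ := eventually_atTop.1 (hy₀.and hy)
  rw [← tendsto_add_atTop_iff_nat N]
  refine tendsto_atTop_of_geom_le (hN (0 + N) (by lia)).1 hq fun n ↦ ?_
  rw [add_right_comm]
  exact (hN (n + N) (by lia)).2

end GeometricComparison

/-- The ratio `x (n + 1) / x n` of consecutive terms, the variable in which the delay equation
becomes affine. It is the `t (n + 1)` of the usual substitution `t n = x n / x (n - 1)`. -/
def stepRatio {K : Type*} [Field K] (x : ℤ → K) (n : ℤ) : K := x (n + 1) / x n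

theorem stepRatio_eq_mul_stepRatio_add {K : Type*} [Field K] {x : ℤ → K} {m n : ℤ} {a b : K}
    (hn : x n ≠ 0) (hx : x (n + 1) = x n * (a * x (m + 1) / x m + b)) :
    stepRatio x n = a * stepRatio x m + b := by
  rw [stepRatio, hx, mul_div_cancel_left₀ _ hn, mul_div_assoc, stepRatio]

theorem stmt_13_general (k : ℕ) (hk : 1 ≤ k) (a b : ℕ → ℝ)
    (ha : ∀ᶠ n in atTop, 0 ≤ a n) (hb : ∀ᶠ n in atTop, 0 ≤ b n)
    (x : ℤ → ℝ) (hpos : ∀ n : ℤ, -(k : ℤ) ≤ n → 0 < x n)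
    (hx : ∀ n : ℕ,
      x ((n : ℤ) + 1) = x (n : ℤ) * (a n * x ((n : ℤ) - k + 1) / x ((n : ℤ) - k) + b n)) :
    ((∃ q < 1, ∀ᶠ n in atTop, a n + b n ≤ q) → Tendsto x atTop (𝓝 0)) ∧
    ((∃ q > 1, ∀ᶠ n in atTop, q ≤ a n + b n) → Tendsto x atTop atTop) := by
  have hpos_nat (n : ℕ) : 0 < x n := hpos n (by lia)
  let t (n : ℕ) : ℝ := stepRatio x (n - k)
  have ht_pos (n : ℕ) : 0 < t n := div_pos (hpos _ (by lia)) (hpos _ (by lia))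
  have ht_shift (n : ℕ) : t (n + k) = stepRatio x n := by simp [t]
  have ht (n : ℕ) : t (n + k) = a n * t n + b n :=
    (ht_shift n).trans (stepRatio_eq_mul_stepRatio_add (hpos_nat n).ne' (hx n))
  have hx_succ (n : ℕ) : x ((n + 1 : ℕ) : ℤ) = t (n + k) * x n := by
    rw [ht_shift, stepRatio, div_mul_cancel₀ _ (hpos_nat n).ne', Nat.cast_succ]
  rw [← map_natCast_int_atTop, tendsto_map'_iff, tendsto_map'_iff]
  constructor
  · rintro ⟨q, hq, hab⟩
    have htq := eventually_le_of_delay_le_mul_add hk ha hb hq hab (.of_forall fun n ↦ (ht n).le)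
    refine tendsto_zero_of_eventually_succ_le_mul hq (.of_forall fun n ↦ (hpos_nat n).le) ?_
    filter_upwards [(tendsto_add_atTop_nat k).eventually htq] with n hn
    exact (hx_succ n).trans_le (mul_le_mul_of_nonneg_right hn (hpos_nat n).le)
  · rintro ⟨q, hq, hab⟩
    have htq := eventually_ge_of_mul_add_le_delay hk ha hb hq hab ht_pos
      (.of_forall fun n ↦ (ht n).ge)
    refine tendsto_atTop_of_eventually_mul_le_succ hq (.of_forall hpos_nat) ?_
    filter_upwards [(tendsto_add_atTop_nat k).eventually htq] with n hn
    exact (mul_le_mul_of_nonneg_right hn (hpos_nat n).le).trans_eq (hx_succ n).symm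

/-- Example 1 (asymptotics): for the rational delay equation
`x_{n+1} = x_n (a_n x_{n-k+1}/x_{n-k} + b_n)` with `a_n → a > 0`, `b_n → b ≥ 0` and
`a + b ≠ 1`, every positive solution converges to `0` if `a + b < 1` and to `∞` if
`a + b > 1`. -/
theorem stmt_13 (k : ℕ) (hk : 1 ≤ k) (a b : ℕ → ℝ)
    (ha : ∀ n, 0 < a n) (hb : ∀ n, 0 < b n) (A B : ℝ)
    (hA : Filter.Tendsto a Filter.atTop (nhds A)) (hApos : 0 < A)
    (hB : Filter.Tendsto b Filter.atTop (nhds B)) (hBnn : 0 ≤ B)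
    (hAB : A + B ≠ 1)
    (x : ℤ → ℝ) (hpos : ∀ n : ℤ, -(k : ℤ) ≤ n → 0 < x n)
    (hx : ∀ n : ℕ,
      x ((n : ℤ) + 1) = x (n : ℤ) * (a n * x ((n : ℤ) - k + 1) / x ((n : ℤ) - k) + b n)) :
    (A + B < 1 → Filter.Tendsto x Filter.atTop (nhds 0)) ∧
    (A + B > 1 → Filter.Tendsto x Filter.atTop Filter.atTop) := by
  have h := stmt_13_general k hk a b (.of_forall fun n ↦ (ha n).le) (.of_forall fun n ↦ (hb n).le)
    x hpos hx
  exact ⟨fun hlt ↦ h.1 <| (exists_between hlt).imp fun _ hq ↦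
      ⟨hq.2, (hA.add hB).eventually_le_const hq.1⟩,
    fun hgt ↦ h.2 <| (exists_between hgt).imp fun _ hq ↦
      ⟨hq.1, (hA.add hB).eventually_const_le hq.2⟩⟩
end

section
/- Let a be a nonzero real number and let (x_n)_{n ≥ -2} be a real sequence with x_0 ≠ x_{-1} and x_{-2} ≠ x_{-1} satisfying x_{n+1} = x_n + a (x_n - x_{n-1})^2 / (x_{n-1} - x_{n-2}) for all n ≥ 0. Set t_0 := x_0 - x_{-1} and s_0 := (x_0 - x_{-1}) / (x_{-1} - x_{-2}). Then x_n ≠ x_{n-1} for all n ≥ -1 (so all denominators in the recursion are nonzero), and for every n ≥ 0, x_n = x_0 + t_0 ∑_{j=1}^{n} s_0^j a^{j(j+1)/2}. -/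
/-!
The differences `t_n = x_n - x_{n-1}` satisfy `t_{n+1} = a t_n² / t_{n-1}`, and the ratios
`s_n = t_n / t_{n-1}` of these satisfy `s_{n+1} = a s_n`. So `s_n = s_0 a^n`; multiplying the ratios
gives `t_n = t_0 s_0^n a^{1 + ⋯ + n}`, and adding up the differences gives `x_n`.
-/

open Finset

theorem prod_range_mul_pow_succ {M : Type*} [CommMonoid M] (s a : M) (n : ℕ) :
    ∏ i ∈ range n, s * a ^ (i + 1) = s ^ n * a ^ (n * (n + 1) / 2) := by
  have sum_succ : ∑ i ∈ range n, (i + 1) = n * (n + 1) / 2 :=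
    calc ∑ i ∈ range n, (i + 1) = ∑ i ∈ range (n + 1), i := by rw [sum_range_succ', add_zero]
      _ = n * (n + 1) / 2 := by rw [sum_range_id, Nat.add_sub_cancel, mul_comm]
  rw [prod_mul_distrib, prod_const, card_range, prod_pow_eq_pow_sum, sum_succ]

theorem eq_add_sum_Icc_sub {A : Type*} [AddCommGroup A] (x : ℤ → A) (n : ℕ) :
    x n = x 0 + ∑ j ∈ Icc 1 n, (x j - x (j - 1)) := by
  induction n with
  | zero => simp
  | succ n ih =>
    rw [sum_Icc_succ_top (Nat.le_add_left 1 n), ← add_assoc, ← ih, Nat.cast_succ,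
      add_sub_cancel_right, add_sub_cancel]

/-- The factor equation `t_{n+1} = a t_n² / t_{n-1}`, with indices shifted by one: `t 0` is the
paper's `t_{-1}`. Division by `0` gives `0`, so `t n = 0` forces `t (n + 2) = 0`. -/
def IsFactorSolution {G : Type*} [CommGroupWithZero G] (a : G) (t : ℕ → G) : Prop :=
  ∀ n, t (n + 2) = a * t (n + 1) ^ 2 / t n

namespace IsFactorSolution

variable {G : Type*} [CommGroupWithZero G] {a : G} {t : ℕ → G}

theorem succ_succ_eq_mul_div (h : IsFactorSolution a t) (n : ℕ) :
    t (n + 2) = a * (t (n + 1) / t n) * t (n + 1) := by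
  rw [h n, sq, ← mul_assoc, mul_div_right_comm, mul_div_assoc]

theorem div_succ_succ (h : IsFactorSolution a t) (n : ℕ) :
    t (n + 2) / t (n + 1) = a * (t (n + 1) / t n) := by
  rcases eq_or_ne (t (n + 1)) 0 with hzero | hne
  · simp [hzero]
  · rw [h.succ_succ_eq_mul_div, mul_div_cancel_right₀ _ hne]

theorem div_eq_mul_pow (h : IsFactorSolution a t) (n : ℕ) :
    t (n + 1) / t n = t 1 / t 0 * a ^ n := by
  induction n with
  | zero => simp
  | succ n ih => rw [h.div_succ_succ, ih, pow_succ', mul_left_comm]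

theorem succ_eq_mul_prod (h : IsFactorSolution a t) (n : ℕ) :
    t (n + 1) = t 1 * ∏ i ∈ range n, t 1 / t 0 * a ^ (i + 1) := by
  induction n with
  | zero => simp
  | succ n ih =>
    calc t (n + 2) = a * (t 1 / t 0 * a ^ n) * t (n + 1) := by
          rw [h.succ_succ_eq_mul_div, h.div_eq_mul_pow]
      _ = t (n + 1) * (t 1 / t 0 * a ^ (n + 1)) := by
          rw [mul_left_comm, ← pow_succ', mul_comm]
      _ = t 1 * ∏ i ∈ range (n + 1), t 1 / t 0 * a ^ (i + 1) := by
          rw [ih, prod_range_succ, mul_assoc]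

theorem succ_eq_mul_pow (h : IsFactorSolution a t) (n : ℕ) :
    t (n + 1) = t 1 * ((t 1 / t 0) ^ n * a ^ (n * (n + 1) / 2)) := by
  rw [h.succ_eq_mul_prod, prod_range_mul_pow_succ]

theorem ne_zero (h : IsFactorSolution a t) (ha : a ≠ 0) (h0 : t 0 ≠ 0) (h1 : t 1 ≠ 0) :
    ∀ n, t n ≠ 0
  | 0 => h0
  | n + 1 => by
    rw [h.succ_eq_mul_pow]
    exact mul_ne_zero h1 (mul_ne_zero (pow_ne_zero _ (div_ne_zero h1 h0)) (pow_ne_zero _ ha))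

end IsFactorSolution

/-- The form symmetry `t_n = x_n - x_{n-1}` of a sequence `(x_n)_{n ≥ -2}`, reindexed over `ℕ` so
that entry `0` is `t_{-1}` and entry `1` is `t_0`. -/
def shiftedDiff {A : Type*} [AddGroup A] (x : ℤ → A) (n : ℕ) : A :=
  x (n - 1) - x (n - 2)

section shiftedDiff

variable {A : Type*} [AddGroup A] (x : ℤ → A)

theorem shiftedDiff_zero : shiftedDiff x 0 = x (-1) - x (-2) := by
  simp [shiftedDiff]

theorem shiftedDiff_succ (n : ℕ) : shiftedDiff x (n + 1) = x n - x (n - 1) := by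
  have index_pred : ((n + 1 : ℕ) : ℤ) - 1 = n := by lia
  have index_pred_pred : ((n + 1 : ℕ) : ℤ) - 2 = n - 1 := by lia
  rw [shiftedDiff, index_pred, index_pred_pred]

theorem shiftedDiff_one : shiftedDiff x 1 = x 0 - x (-1) := by
  simpa using shiftedDiff_succ x 0

end shiftedDiff

theorem isFactorSolution_shiftedDiff {K : Type*} [Field K] {a : K} {x : ℤ → K}
    (hx : ∀ n : ℕ, x (n + 1) = x n + a * (x n - x (n - 1)) ^ 2 / (x (n - 1) - x (n - 2))) :
    IsFactorSolution a (shiftedDiff x) := by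
  intro n
  rw [shiftedDiff_succ, shiftedDiff_succ, shiftedDiff, Nat.cast_succ, add_sub_cancel_right,
    hx, add_sub_cancel_left]

theorem stmt_14_general {K : Type*} [Field K] (a : K) (ha : a ≠ 0) (x : ℤ → K)
    (h1 : x 0 ≠ x (-1)) (h2 : x (-2) ≠ x (-1))
    (hx : ∀ n : ℕ, x (n + 1) = x n + a * (x n - x (n - 1)) ^ 2 / (x (n - 1) - x (n - 2))) :
    (∀ n : ℤ, -1 ≤ n → x n ≠ x (n - 1)) ∧
    ∀ n : ℕ, x n = x 0 + (x 0 - x (-1)) *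
      ∑ j ∈ Icc 1 n, ((x 0 - x (-1)) / (x (-1) - x (-2))) ^ j * a ^ (j * (j + 1) / 2) := by
  have factor := isFactorSolution_shiftedDiff hx
  constructor
  · intro n hn
    have initial_ne_zero : shiftedDiff x 0 ≠ 0 := by
      rwa [shiftedDiff_zero, sub_ne_zero, ne_comm]
    have next_ne_zero : shiftedDiff x 1 ≠ 0 := by
      rwa [shiftedDiff_one, sub_ne_zero]
    obtain ⟨m, rfl⟩ : ∃ m : ℕ, n = m - 1 := ⟨(n + 1).toNat, by lia⟩
    rw [sub_sub, one_add_one_eq_two, ← sub_ne_zero]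
    exact factor.ne_zero ha initial_ne_zero next_ne_zero m
  · intro n
    calc x n = x 0 + ∑ j ∈ Icc 1 n, shiftedDiff x (j + 1) := by
          simp only [shiftedDiff_succ, ← eq_add_sum_Icc_sub]
      _ = _ := by
          rw [sum_congr rfl fun j _ ↦ factor.succ_eq_mul_pow j, ← mul_sum, shiftedDiff_one,
            shiftedDiff_zero]

/-- Example 2: for `x_{n+1} = x_n + a(x_n - x_{n-1})^2/(x_{n-1} - x_{n-2})` with
`a ≠ 0` and initial values satisfying `x_0 ≠ x_{-1}`, `x_{-2} ≠ x_{-1}`, all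
denominators stay nonzero and the solution is given explicitly by
`x_n = x_0 + t_0 ∑_{j=1}^n s_0^j a^{j(j+1)/2}` with `t_0 = x_0 - x_{-1}` and
`s_0 = (x_0 - x_{-1})/(x_{-1} - x_{-2})`. -/
theorem stmt_14 (a : ℝ) (ha : a ≠ 0) (x : ℤ → ℝ)
    (h1 : x 0 ≠ x (-1)) (h2 : x (-2) ≠ x (-1))
    (hx : ∀ n : ℕ, x ((n : ℤ) + 1) =
      x (n : ℤ) + a * (x (n : ℤ) - x ((n : ℤ) - 1)) ^ 2 / (x ((n : ℤ) - 1) - x ((n : ℤ) - 2))) :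
    (∀ n : ℤ, -1 ≤ n → x n ≠ x (n - 1)) ∧
    ∀ n : ℕ, x (n : ℤ) = x 0 + (x 0 - x (-1)) *
      ∑ j ∈ Finset.Icc 1 n,
        ((x 0 - x (-1)) / (x (-1) - x (-2))) ^ j * a ^ (j * (j + 1) / 2) :=
  stmt_14_general a ha x h1 h2 hx
end
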